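/- arXiv:2501.00102 — 2 statements merged into one kernel-verified Lean document; each statement's English description precedes it below -/
import Mathlib

section
/- Let D be a finite digraph on n > 1 vertices with diameter at most 2. Then there exists a vertex v such that either D − v is not strongly connected, or W(D − v) < W(D). -/
/-!
Let `d'` be the distance of `D - u`, let `F u` be the number of ordered pairs at distance two whose
only midpoint is `u`, and let `T u` be the sum of all distances from and to `u`. Deleting `u`
removes `T u` from the total distance and lengthens only the distances of the `F u` pairs.

A pair at distance two has at most one sole midpoint and every vertex has an out-neighbour, so
`∑ u, (4 * F u + 2) ≤ 2 * W D = ∑ u, T u`, and some `u` satisfies `4 * F u + 2 ≤ T u`. If no `d'`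
exceeds `6`, deleting `u` costs at most `4 * F u < T u` and the total distance drops. If instead
`7 ≤ d' a b`, possibly infinite, then every `x` has `3 < d' a x` or `3 < d' x b`, so `u` is the sole
midpoint of `(a, x)` or of `(x, b)`. This makes `F u ≥ n - 2`, and puts an arc between `u` and every
`x`, so that `T u ≤ 3 * (n - 1)`; the choice of `u` then forces `n ≤ 3`. For such `n`, distances
in `D - u` exceed `6` only if `D - u` is not strongly connected.
-/

/-- A directed walk of length `n` from `u` to `v` along the arc relation `A`. -/
def DWalk {V : Type*} (A : V → V → Prop) : ℕ → V → V → Prop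
  | 0, u, v => u = v
  | n+1, u, v => ∃ w, A u w ∧ DWalk A n w v

/-- Directed distance: length of a shortest directed path (`⊤` if none exists). -/
noncomputable def ddist {V : Type*} (A : V → V → Prop) (u v : V) : ℕ∞ :=
  sInf {k : ℕ∞ | ∃ n : ℕ, k = n ∧ DWalk A n u v}

/-- Strong connectivity. -/
def StrongConn {V : Type*} (A : V → V → Prop) : Prop := ∀ u v, ∃ n, DWalk A n u v

/-- The induced subdigraph obtained by deleting vertex `v`. -/
def delRel {V : Type*} (A : V → V → Prop) (v : V) :
    {x : V // x ≠ v} → {x : V // x ≠ v} → Prop :=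
  fun a b => A a.1 b.1

/-- Total distance (Wiener index): sum of distances over ordered pairs
(the diagonal contributes `0`). -/
noncomputable def wiener {V : Type*} [Fintype V] (A : V → V → Prop) : ℕ∞ :=
  ∑ u, ∑ w, ddist A u w

section Digraph

variable {V : Type*} {A : V → V → Prop}

section Distance

variable {u v w : V} {m n : ℕ}

theorem dWalk_add_iff : DWalk A (m + n) u w ↔ ∃ v, DWalk A m u v ∧ DWalk A n v w := by
  induction m generalizing u with
  | zero => simp [DWalk]
  | succ m ih =>
    simp only [Nat.succ_add, DWalk, ih]
    grind

theorem dWalk_one_iff : DWalk A 1 u v ↔ A u v := by simp [DWalk]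

theorem dWalk_two_iff : DWalk A 2 u w ↔ ∃ v, A u v ∧ A v w := by simp [DWalk]

theorem ddist_le_of_dWalk (h : DWalk A n u v) : ddist A u v ≤ n := sInf_le ⟨n, rfl, h⟩

theorem dWalk_of_ddist_eq (h : ddist A u v = n) : DWalk A n u v := by
  have hne : {k : ℕ∞ | ∃ n : ℕ, k = n ∧ DWalk A n u v}.Nonempty := by
    by_contra hempty
    rw [ddist, Set.not_nonempty_iff_eq_empty.1 hempty, sInf_empty] at h
    exact ENat.top_ne_natCast n h
  obtain ⟨k, hk, hwalk⟩ := csInf_mem hne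
  have hkn : k = n := by exact_mod_cast hk.symm.trans h
  exact hkn ▸ hwalk

theorem ddist_self (A : V → V → Prop) (u : V) : ddist A u u = 0 :=
  nonpos_iff_eq_zero.1 (ddist_le_of_dWalk (n := 0) rfl)

theorem ddist_eq_zero_iff : ddist A u v = 0 ↔ u = v :=
  ⟨fun h => dWalk_of_ddist_eq (n := 0) h, fun h => h ▸ ddist_self A u⟩

theorem ddist_le_one_of_adj (h : A u v) : ddist A u v ≤ 1 := by
  exact_mod_cast ddist_le_of_dWalk (dWalk_one_iff.2 h)

theorem ddist_triangle (A : V → V → Prop) (u v w : V) :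
    ddist A u w ≤ ddist A u v + ddist A v w := by
  cases huv : ddist A u v with
  | top => simp
  | coe m =>
    cases hvw : ddist A v w with
    | top => simp
    | coe n =>
      exact_mod_cast ddist_le_of_dWalk
        (dWalk_add_iff.2 ⟨v, dWalk_of_ddist_eq huv, dWalk_of_ddist_eq hvw⟩)

theorem exists_ddist_eq_of_le (htop : ddist A u v ≠ ⊤) (hn : n ≤ ddist A u v) :
    ∃ w, ddist A u w = n := by
  obtain ⟨l, hl⟩ := ENat.ne_top_iff_exists.1 htop
  obtain ⟨m, rfl⟩ := Nat.exists_eq_add_of_le (Nat.cast_le.1 (hn.trans_eq hl.symm))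
  obtain ⟨w, hw, hwv⟩ := dWalk_add_iff.1 (dWalk_of_ddist_eq hl.symm)
  refine ⟨w, (ddist_le_of_dWalk hw).antisymm ?_⟩
  rw [← ENat.add_le_add_iff_right (ENat.natCast_ne_top m)]
  calc (n : ℕ∞) + m = ddist A u v := by exact_mod_cast hl
    _ ≤ ddist A u w + ddist A w v := ddist_triangle A u w v
    _ ≤ ddist A u w + m := by gcongr; exact ddist_le_of_dWalk hwv

theorem exists_ddist_eq_one [Nontrivial V] (h : ∀ v, ddist A u v ≠ ⊤) :
    ∃ w, ddist A u w = 1 := by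
  obtain ⟨v, hv⟩ := exists_ne u
  have hpos : ((1 : ℕ) : ℕ∞) ≤ ddist A u v := by
    rw [Nat.cast_one, Order.one_le_iff_ne_zero]
    exact fun h0 => hv (ddist_eq_zero_iff.1 h0).symm
  exact_mod_cast exists_ddist_eq_of_le (h v) hpos

theorem ddist_lt_card [Fintype V] (htop : ddist A u v ≠ ⊤) : ddist A u v < Fintype.card V := by
  classical
  obtain ⟨d, hd⟩ := ENat.ne_top_iff_exists.1 htop
  have hsub : (Finset.range (d + 1)).image ((↑) : ℕ → ℕ∞) ⊆ Finset.univ.image (ddist A u) := by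
    intro k hk
    obtain ⟨n, hn, rfl⟩ := Finset.mem_image.1 hk
    have hnd : (n : ℕ∞) ≤ ddist A u v := by
      rw [← hd]
      exact_mod_cast Finset.mem_range_succ_iff.1 hn
    obtain ⟨w, hw⟩ := exists_ddist_eq_of_le htop hnd
    exact Finset.mem_image.2 ⟨w, Finset.mem_univ w, hw⟩
  have hcard : d + 1 ≤ Fintype.card V := by
    calc d + 1 = ((Finset.range (d + 1)).image ((↑) : ℕ → ℕ∞)).card := by
          rw [Finset.card_image_of_injective _ Nat.cast_injective, Finset.card_range]
      _ ≤ (Finset.univ.image (ddist A u)).card := Finset.card_le_card hsub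
      _ ≤ Fintype.card V := Finset.card_image_le
  rw [← hd]
  exact_mod_cast hcard

theorem StrongConn.ddist_ne_top (hA : StrongConn A) (u v : V) : ddist A u v ≠ ⊤ := by
  obtain ⟨n, hn⟩ := hA u v
  exact ne_top_of_le_ne_top (ENat.natCast_ne_top n) (ddist_le_of_dWalk hn)

end Distance

section Transmission

variable [Fintype V]

/-- The transmission of `u`: the sum of its distances to and from all vertices, that is, the
contribution of `u` to the total distance. -/
noncomputable def transmission (A : V → V → Prop) (u : V) : ℕ∞ :=
  ∑ x, (ddist A u x + ddist A x u)

theorem sum_transmission (A : V → V → Prop) : ∑ u, transmission A u = 2 * wiener A := by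
  simp only [transmission, Finset.sum_add_distrib]
  rw [Finset.sum_comm (f := fun u x => ddist A x u), two_mul, wiener]

theorem wiener_eq_transmission_add [DecidableEq V] (A : V → V → Prop) (u : V) :
    wiener A = transmission A u + ∑ a : {x // x ≠ u}, ∑ b : {x // x ≠ u}, ddist A a b := by
  simp only [wiener, transmission, Finset.sum_add_distrib,
    Fintype.sum_eq_add_sum_subtype_ne _ u, ddist_self]
  ring

theorem wiener_ne_top (h : ∀ a b, ddist A a b ≠ ⊤) : wiener A ≠ ⊤ :=
  ENat.sum_ne_top.2 fun a _ => ENat.sum_ne_top.2 fun b _ => h a b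

theorem transmission_add_three_le {u : V} (hout : ∀ x, ddist A u x ≤ 2)
    (hin : ∀ x, ddist A x u ≤ 2) (hadj : ∀ x, x ≠ u → A u x ∨ A x u) :
    transmission A u + 3 ≤ 3 * Fintype.card V := by
  classical
  have hterm (x : V) : ddist A u x + ddist A x u + (if x = u then 3 else 0) ≤ 3 := by
    obtain rfl | hx := eq_or_ne x u
    · simp [ddist_self]
    · rw [if_neg hx, add_zero]
      obtain h | h := hadj x hx
      · exact (add_le_add (ddist_le_one_of_adj h) (hin x)).trans_eq (by norm_num)
      · exact (add_le_add (hout x) (ddist_le_one_of_adj h)).trans_eq (by norm_num)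
  calc transmission A u + 3
      = ∑ x, (ddist A u x + ddist A x u + if x = u then 3 else 0) := by
        simp [transmission, Finset.sum_add_distrib]
    _ ≤ ∑ _x : V, 3 := Finset.sum_le_sum fun x _ => hterm x
    _ = 3 * Fintype.card V := by simp [mul_comm]

theorem two_mul_card_add_card_le_wiener [Nontrivial V] (h : ∀ a b, ddist A a b ≠ ⊤) :
    2 * (Finset.univ.filter fun p : V × V => ddist A p.1 p.2 = 2).card + Fintype.card V
      ≤ wiener A := by
  classical
  choose c hc using fun a => exists_ddist_eq_one (h a)
  have hterm (a b : V) :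
      (if ddist A a b = 2 then 2 else 0) + (if b = c a then 1 else 0) ≤ ddist A a b := by
    by_cases hb : b = c a
    · simp [hb, hc]
    · by_cases h2 : ddist A a b = 2 <;> simp [hb, h2]
  calc (2 * (Finset.univ.filter fun p : V × V => ddist A p.1 p.2 = 2).card + Fintype.card V : ℕ∞)
      = ∑ a, ∑ b, ((if ddist A a b = 2 then 2 else 0) + (if b = c a then 1 else 0)) := by
        simp only [Finset.sum_add_distrib]
        rw [← Fintype.sum_prod_type' (f := fun a b => if ddist A a b = 2 then (2 : ℕ∞) else 0),
          ← Finset.sum_filter]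
        simp [mul_comm]
    _ ≤ wiener A := Finset.sum_le_sum fun a _ => Finset.sum_le_sum fun b _ => hterm a b

end Transmission

/-- `u` is the only midpoint of the ordered pair `(a, b)` at distance two: these are the pairs whose
distance grows when `u` is deleted from a digraph of diameter two. -/
def IsSoleMidpoint (A : V → V → Prop) (u a b : V) : Prop :=
  ddist A a b = 2 ∧ ∀ c, A a c → A c b → c = u

namespace IsSoleMidpoint

variable {u v a b : V}

theorem adj (h : IsSoleMidpoint A u a b) : A a u ∧ A u b := by
  obtain ⟨c, hac, hcb⟩ := dWalk_two_iff.1 (dWalk_of_ddist_eq h.1)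
  exact h.2 c hac hcb ▸ ⟨hac, hcb⟩

theorem unique (hu : IsSoleMidpoint A u a b) (hv : IsSoleMidpoint A v a b) : u = v :=
  hv.2 u hu.adj.1 hu.adj.2

theorem of_ddist_lt {a b : {x // x ≠ u}} (hab : ddist A a b ≤ 2)
    (hlt : ddist A a b < ddist (delRel A u) a b) : IsSoleMidpoint A u a b := by
  obtain ⟨n, hn⟩ := ENat.ne_top_iff_exists.1 hlt.ne_top
  have hwalk : DWalk A n a b := dWalk_of_ddist_eq hn.symm
  have hnot : ¬ DWalk (delRel A u) n a b := fun h =>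
    (hn.symm ▸ ddist_le_of_dWalk h).not_gt hlt
  have hn2 : n ≤ 2 := by exact_mod_cast hn.trans_le hab
  interval_cases n
  · exact (hnot (Subtype.ext hwalk)).elim
  · have hadj : A a b := dWalk_one_iff.1 hwalk
    exact (hnot (dWalk_one_iff.2 hadj)).elim
  · refine ⟨hn.symm, fun c hac hcb => ?_⟩
    by_contra hc
    exact hnot (dWalk_two_iff.2 ⟨⟨c, hc⟩, hac, hcb⟩)

end IsSoleMidpoint

section SolePairs

variable [Fintype V]

open scoped Classical in
/-- The ordered pairs with sole midpoint `u`; their number bounds how many distances can grow when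
`u` is deleted. -/
noncomputable def solePairs (A : V → V → Prop) (u : V) : Finset (V × V) :=
  Finset.univ.filter fun p => IsSoleMidpoint A u p.1 p.2

theorem mem_solePairs {u : V} {p : V × V} :
    p ∈ solePairs A u ↔ IsSoleMidpoint A u p.1 p.2 := by
  simp [solePairs]

theorem sum_card_solePairs_le (A : V → V → Prop) :
    ∑ u, (solePairs A u).card
      ≤ (Finset.univ.filter fun p : V × V => ddist A p.1 p.2 = 2).card := by
  classical
  have hdisj : ((Finset.univ : Finset V) : Set V).PairwiseDisjoint (solePairs A) :=
    fun u _ v _ huv => Finset.disjoint_left.2 fun p hu hv =>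
      huv ((mem_solePairs.1 hu).unique (mem_solePairs.1 hv))
  rw [← Finset.card_biUnion hdisj]
  refine Finset.card_le_card fun p hp => ?_
  obtain ⟨u, -, hu⟩ := Finset.mem_biUnion.1 hp
  exact Finset.mem_filter.2 ⟨Finset.mem_univ p, (mem_solePairs.1 hu).1⟩

theorem exists_four_mul_card_solePairs_add_two_le_transmission [Nontrivial V]
    (h : ∀ a b, ddist A a b ≠ ⊤) :
    ∃ u, 4 * ((solePairs A u).card : ℕ∞) + 2 ≤ transmission A u := by
  have hsum : ∑ u, ((4 * (solePairs A u).card + 1 : ℕ) : ℕ∞) < ∑ u, transmission A u := by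
    set N := (Finset.univ.filter fun p : V × V => ddist A p.1 p.2 = 2).card
    have hN : ∑ u, (4 * (solePairs A u).card + 1) < 2 * (2 * N + Fintype.card V) := by
      rw [Finset.sum_add_distrib, ← Finset.mul_sum, Finset.sum_const, Finset.card_univ, smul_eq_mul]
      have := sum_card_solePairs_le A
      have := Fintype.card_pos (α := V)
      lia
    calc ∑ u, ((4 * (solePairs A u).card + 1 : ℕ) : ℕ∞)
        < 2 * (2 * N + Fintype.card V) := by exact_mod_cast hN
      _ ≤ 2 * wiener A := by gcongr; exact two_mul_card_add_card_le_wiener h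
      _ = ∑ u, transmission A u := (sum_transmission A).symm
  obtain ⟨u, -, hu⟩ := Finset.exists_lt_of_sum_lt hsum
  exact ⟨u, by exact_mod_cast ENat.natCast_add_one_le_iff.2 hu⟩

theorem card_le_card_solePairs_add_two {u a b : V}
    (h : ∀ x, x ≠ u → IsSoleMidpoint A u a x ∨ IsSoleMidpoint A u x b) :
    Fintype.card V ≤ (solePairs A u).card + 2 := by
  classical
  let pairing (x : V) : V × V := if IsSoleMidpoint A u a x then (a, x) else (x, b)
  have hmaps : Set.MapsTo pairing ↑(Finset.univ \ {u, b}) ↑(solePairs A u) := by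
    intro x hx
    have hxu : x ≠ u := by grind
    have := h x hxu
    simp only [pairing, Finset.mem_coe, mem_solePairs]
    grind
  have hinj : Set.InjOn pairing ↑(Finset.univ \ {u, b}) := by
    intro x hx y hy hxy
    simp only [pairing] at hxy
    grind
  have hcard := Finset.card_le_card_of_injOn pairing hmaps hinj
  have hsdiff := Finset.le_card_sdiff {u, b} (Finset.univ : Finset V)
  have htwo : ({u, b} : Finset V).card ≤ 2 := Finset.card_le_two
  rw [Finset.card_univ] at hsdiff
  lia

theorem wiener_delRel_add_transmission_le [DecidableEq V] {u : V} {k : ℕ∞}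
    (hdiam : ∀ a b, ddist A a b ≤ 2) (hk : ∀ a b, ddist (delRel A u) a b ≤ 2 + k) :
    wiener (delRel A u) + transmission A u ≤ wiener A + k * (solePairs A u).card := by
  classical
  let excess (a b : V) : ℕ∞ := if IsSoleMidpoint A u a b then k else 0
  have hterm (a b : {x // x ≠ u}) : ddist (delRel A u) a b ≤ ddist A a b + excess a b := by
    by_cases h : IsSoleMidpoint A u a b
    · simpa only [excess, if_pos h, h.1] using hk a b
    · simpa only [excess, if_neg h, add_zero] using
        not_lt.1 fun hlt => h (.of_ddist_lt (hdiam a b) hlt)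
  have hexcess : ∑ a : {x // x ≠ u}, ∑ b : {x // x ≠ u}, excess a b
      ≤ k * (solePairs A u).card := by
    calc ∑ a : {x // x ≠ u}, ∑ b : {x // x ≠ u}, excess a b ≤ ∑ a, ∑ b, excess a b := by
          simp only [Fintype.sum_eq_add_sum_subtype_ne _ u, Finset.sum_add_distrib]
          exact le_add_left le_add_self
      _ = k * (solePairs A u).card := by
          rw [← Fintype.sum_prod_type', ← Finset.sum_filter]
          simp [solePairs, mul_comm]
  calc wiener (delRel A u) + transmission A u
      ≤ ∑ a : {x // x ≠ u}, ∑ b : {x // x ≠ u}, (ddist A a b + excess a b) + transmission A u := by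
        gcongr
        exact Finset.sum_le_sum fun a _ => Finset.sum_le_sum fun b _ => hterm a b
    _ = wiener A + ∑ a : {x // x ≠ u}, ∑ b : {x // x ≠ u}, excess a b := by
        rw [wiener_eq_transmission_add A u]
        simp only [Finset.sum_add_distrib]
        ring
    _ ≤ wiener A + k * (solePairs A u).card := by gcongr

theorem wiener_delRel_lt [DecidableEq V] {u : V} {k : ℕ∞}
    (hdiam : ∀ a b, ddist A a b ≤ 2) (hk : ∀ a b, ddist (delRel A u) a b ≤ 2 + k)
    (hlt : k * (solePairs A u).card < transmission A u) : wiener (delRel A u) < wiener A := by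
  have htop : wiener A ≠ ⊤ :=
    wiener_ne_top fun a b => ne_top_of_le_ne_top (ENat.natCast_ne_top 2) (hdiam a b)
  by_contra! hle
  refine hlt.not_ge ((ENat.add_le_add_iff_left htop).1 ?_)
  calc wiener A + transmission A u ≤ wiener (delRel A u) + transmission A u := by gcongr
    _ ≤ wiener A + k * (solePairs A u).card := wiener_delRel_add_transmission_le hdiam hk

theorem card_le_three_of_six_lt_ddist_delRel {u : V} {a b : {x // x ≠ u}}
    (hdiam : ∀ a b, ddist A a b ≤ 2)
    (hu : 4 * ((solePairs A u).card : ℕ∞) + 2 ≤ transmission A u)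
    (hfar : 6 < ddist (delRel A u) a b) : Fintype.card V ≤ 3 := by
  have hsole {x y : {x // x ≠ u}} (hxy : 3 < ddist (delRel A u) x y) : IsSoleMidpoint A u x y :=
    .of_ddist_lt (hdiam x y) ((hdiam x y).trans_lt (lt_trans (by norm_num) hxy))
  have hcover (x : V) (hx : x ≠ u) : IsSoleMidpoint A u a x ∨ IsSoleMidpoint A u x b := by
    by_contra! hnot
    have hax : ddist (delRel A u) a ⟨x, hx⟩ ≤ 3 := not_lt.1 fun h => hnot.1 (hsole h)
    have hxb : ddist (delRel A u) ⟨x, hx⟩ b ≤ 3 := not_lt.1 fun h => hnot.2 (hsole h)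
    refine hfar.not_ge ((ddist_triangle _ a ⟨x, hx⟩ b).trans ?_)
    exact (add_le_add hax hxb).trans_eq (by norm_num)
  have hF : Fintype.card V ≤ (solePairs A u).card + 2 :=
    card_le_card_solePairs_add_two hcover
  have hT : transmission A u + 3 ≤ 3 * Fintype.card V :=
    transmission_add_three_le (hdiam u) (hdiam · u) fun x hx =>
      (hcover x hx).imp (fun h => h.adj.2) (fun h => h.adj.1)
  have hFT : 4 * (solePairs A u).card + 2 + 3 ≤ 3 * Fintype.card V := by
    exact_mod_cast (add_le_add_left hu 3).trans hT
  lia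

theorem ddist_delRel_le_six {u : V} (hdiam : ∀ a b, ddist A a b ≤ 2)
    (hu : 4 * ((solePairs A u).card : ℕ∞) + 2 ≤ transmission A u)
    (hsmall : Fintype.card V ≤ 3 → StrongConn (delRel A u)) (a b : {x // x ≠ u}) :
    ddist (delRel A u) a b ≤ 6 := by
  classical
  by_contra! hfar
  have hcard := card_le_three_of_six_lt_ddist_delRel hdiam hu hfar
  refine hfar.not_ge ((ddist_lt_card ((hsmall hcard).ddist_ne_top a b)).le.trans ?_)
  have hdel : Fintype.card {x // x ≠ u} ≤ Fintype.card V := Fintype.card_subtype_le _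
  exact_mod_cast hdel.trans (hcard.trans (by norm_num))

end SolePairs

theorem strongConn_delRel_of_card_le_two [Fintype V] (A : V → V → Prop) (u : V)
    (hcard : Fintype.card V ≤ 2) : StrongConn (delRel A u) := by
  classical
  have hlt : Fintype.card {x // x ≠ u} < Fintype.card V :=
    Fintype.card_subtype_lt (x := u) (by simp)
  have hsub : Subsingleton {x // x ≠ u} :=
    Fintype.card_le_one_iff_subsingleton.1 (Nat.le_of_lt_succ (hlt.trans_le hcard))
  exact fun a b => ⟨0, Subsingleton.elim a b⟩

end Digraph

-- The case `n = 3` is a genuine exception: in the directed triangle, `W (D - v) = ⊤` for every `v`.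
theorem stmt5_general {V : Type*} [Fintype V] [DecidableEq V] (A : V → V → Prop)
    (hn : 1 < Fintype.card V) (hdiam : ∀ u u' : V, u ≠ u' → ddist A u u' ≤ 2) :
    ∃ v : V, (Fintype.card V = 3 ∧ ¬ StrongConn (delRel A v)) ∨
      wiener (delRel A v) < wiener A := by
  have : Nontrivial V := Fintype.one_lt_card_iff_nontrivial.1 hn
  have hdiam' (a b : V) : ddist A a b ≤ 2 := by
    obtain rfl | hab := eq_or_ne a b
    · simp [ddist_self]
    · exact hdiam a b hab
  have htop (a b : V) : ddist A a b ≠ ⊤ := ne_top_of_le_ne_top (by simp) (hdiam' a b)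
  obtain ⟨u, hu⟩ := exists_four_mul_card_solePairs_add_two_le_transmission htop
  refine ⟨u, or_iff_not_imp_left.2 fun hexc => ?_⟩
  have hsmall (hcard : Fintype.card V ≤ 3) : StrongConn (delRel A u) := by
    obtain hlt | heq := hcard.lt_or_eq
    · exact strongConn_delRel_of_card_le_two A u (Nat.le_of_lt_succ hlt)
    · exact not_not.1 fun h => hexc ⟨heq, h⟩
  have hsix : ∀ a b, ddist (delRel A u) a b ≤ 2 + 4 := fun a b =>
    (ddist_delRel_le_six hdiam' hu hsmall a b).trans_eq (by norm_num)
  have hlt : 4 * ((solePairs A u).card : ℕ∞) < transmission A u :=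
    lt_of_lt_of_le (by exact_mod_cast Nat.lt_add_of_pos_right two_pos) hu
  exact wiener_delRel_lt hdiam' hsix hlt

theorem stmt5 {V : Type*} [Fintype V] [DecidableEq V] (A : V → V → Prop)
    (hirr : Irreflexive A) (hconn : StrongConn A)
    (hn : 1 < Fintype.card V)
    (hdiam : ∀ u u' : V, u ≠ u' → ddist A u u' ≤ 2) :
    ∃ v : V, ¬ StrongConn (delRel A v) ∨ wiener (delRel A v) < wiener A := by
  obtain ⟨v, hv⟩ := stmt5_general A hn hdiam
  exact ⟨v, hv.imp_left And.right⟩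
end

section
/- The circulant digraph D(85, {4}) (arcs i → i−1 and i → i+4 modulo 85) is a Šoltés digraph: for every vertex v, W(D(85,{4})) = W(D(85,{4}) − v), where W is the total directed distance and D − v the induced subdigraph on the remaining 84 vertices. -/
/-- The arc relation of the circulant digraph `D(n,S)`. -/
def circArc (n : ℕ) (S : Set ℕ) : ZMod n → ZMod n → Prop :=
  fun i j => j - i = -1 ∨ ∃ k ∈ S, j - i = (k : ZMod n)

/-!
Both distance functions are given by closed formulas, which are recognised as distances because they
vanish at the target, drop by at most one along every arc, and drop along some arc at every other
vertex. When `k * k ≤ n`, a shortest path in `D(n, {k})` either only descends or climbs through less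
than one full turn, so distances are minima of two explicit costs. Deleting `v` forbids descending
through `v`, and it lengthens by `k + 1` those climbs whose steps `+k` all have to be taken in a row
and hit `v`. For `n = 85` and `k = 4` the distances lost at the pairs involving `v` are exactly
compensated by the longer paths: both totals equal `85 * 850`.
-/

section Distance

variable {V : Type*} {A : V → V → Prop} {d : V → ℕ} {t : V}

theorem le_ddist_of_le_add_one (ht : d t = 0) (hd : ∀ u w, A u w → d u ≤ d w + 1) (u : V) :
    (d u : ℕ∞) ≤ ddist A u t := by
  have le_length : ∀ n u, DWalk A n u t → d u ≤ n := by
    intro n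
    induction n with
    | zero => rintro u rfl; exact ht.le
    | succ n ih =>
      rintro u ⟨w, huw, hwt⟩
      exact (hd u w huw).trans (Nat.succ_le_succ (ih w hwt))
  refine le_sInf ?_
  rintro _ ⟨n, rfl, hn⟩
  exact_mod_cast le_length n u hn

theorem ddist_le_of_exists_lt (hd : ∀ u, u ≠ t → ∃ w, A u w ∧ d w < d u) (u : V) :
    ddist A u t ≤ d u := by
  have exists_walk : ∀ m u, d u ≤ m → ∃ n ≤ m, DWalk A n u t := by
    intro m
    induction m with
    | zero =>
      intro u hu
      refine ⟨0, le_rfl, by_contra fun hut => ?_⟩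
      obtain ⟨w, -, hwu⟩ := hd u hut
      omega
    | succ m ih =>
      intro u hu
      rcases eq_or_ne u t with rfl | hut
      · exact ⟨0, Nat.zero_le _, rfl⟩
      obtain ⟨w, huw, hwu⟩ := hd u hut
      obtain ⟨n, hnm, hwt⟩ := ih w (by omega)
      exact ⟨n + 1, by omega, w, huw, hwt⟩
  obtain ⟨n, hn, hut⟩ := exists_walk (d u) u le_rfl
  calc ddist A u t ≤ n := sInf_le ⟨n, rfl, hut⟩
    _ ≤ d u := by exact_mod_cast hn

theorem ddist_eq_of_potential (ht : d t = 0) (hle : ∀ u w, A u w → d u ≤ d w + 1)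
    (hlt : ∀ u, u ≠ t → ∃ w, A u w ∧ d w < d u) (u : V) : ddist A u t = d u :=
  (ddist_le_of_exists_lt hlt u).antisymm (le_ddist_of_le_add_one ht hle u)

end Distance

/-- The least number of steps `+k` and `-1` leading from `0` to `x` on the integer line: the
fewest steps `+k` that reach `x` or beyond, and the steps `-1` that undo the excess. -/
def climb (k x : ℕ) : ℕ := x ⌈/⌉ k + (k * (x ⌈/⌉ k) - x)

section Climb

variable {k n x c j : ℕ}

theorem climb_eq_of_add_eq (hj : j < k) (h : x + j = k * c) : climb k x = c + j := by
  have hc : x ⌈/⌉ k = c := by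
    rw [Nat.ceilDiv_eq_add_pred_div]
    refine Nat.div_eq_of_lt_le ?_ ?_
    · rw [mul_comm]; omega
    · rw [mul_comm, mul_add]; omega
  rw [climb, hc]
  omega

theorem exists_add_eq_mul (hk : 0 < k) (x : ℕ) : ∃ c, ∃ j < k, x + j = k * c := by
  have hle : x ≤ k * (x ⌈/⌉ k) := le_smul_ceilDiv hk
  have hlt : k * (x ⌈/⌉ k) ≤ x + k - 1 := Nat.mul_div_le (x + k - 1) k
  exact ⟨x ⌈/⌉ k, k * (x ⌈/⌉ k) - x, by omega, by omega⟩

theorem climb_zero (hk : 0 < k) : climb k 0 = 0 :=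
  climb_eq_of_add_eq hk (c := 0) rfl

theorem climb_of_le (hx : 0 < x) (hxk : x ≤ k) : climb k x = k + 1 - x := by
  rw [climb_eq_of_add_eq (c := 1) (j := k - x) (by omega) (by omega)]
  omega

theorem climb_add_self (hk : 0 < k) (x : ℕ) : climb k (x + k) = climb k x + 1 := by
  obtain ⟨c, j, hj, h⟩ := exists_add_eq_mul hk x
  rw [climb_eq_of_add_eq hj h, climb_eq_of_add_eq (c := c + 1) hj (by rw [mul_add]; omega)]
  omega

theorem climb_succ_of_dvd (hk : 0 < k) (hx : k ∣ x) : climb k (x + 1) = climb k x + k := by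
  obtain ⟨c, rfl⟩ := hx
  rw [climb_eq_of_add_eq hk (add_zero _),
    climb_eq_of_add_eq (c := c + 1) (j := k - 1) (by omega) (by rw [mul_add]; omega)]
  omega

theorem climb_succ_of_not_dvd (hk : 0 < k) (hx : ¬ k ∣ x) :
    climb k x = climb k (x + 1) + 1 := by
  obtain ⟨c, j, hj, h⟩ := exists_add_eq_mul hk x
  have hj0 : j ≠ 0 := by
    rintro rfl
    exact hx ⟨c, h⟩
  rw [climb_eq_of_add_eq hj h, climb_eq_of_add_eq (c := c) (j := j - 1) (by omega) (by omega)]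
  omega

theorem climb_le_climb_succ_add_one (hk : 0 < k) (x : ℕ) : climb k x ≤ climb k (x + 1) + 1 := by
  by_cases hx : k ∣ x
  · rw [climb_succ_of_dvd hk hx]; omega
  · exact (climb_succ_of_not_dvd hk hx).le

theorem le_mul_climb (hk : 0 < k) (x : ℕ) : x ≤ k * climb k x :=
  (le_smul_ceilDiv hk).trans (Nat.mul_le_mul_left k (Nat.le_add_right _ _))

/-- This is what makes a second turn around the cycle useless. -/
theorem climb_le_climb_add (hk : 0 < k) (hkn : k * k ≤ n) (hx : x ≤ k) :
    climb k x ≤ climb k (n + x) := by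
  rcases Nat.eq_zero_or_pos x with rfl | hx0
  · rw [climb_zero hk]; exact Nat.zero_le _
  have hmul : k * k ≤ k * climb k (n + x) := by
    have := le_mul_climb hk (n + x)
    omega
  have := Nat.le_of_mul_le_mul_left hmul hk
  rw [climb_of_le hx0 hx]
  omega

end Climb

/-- The arc relation of `D(n, {k})` on representatives in `[0, n)`, for `k ≤ n`. -/
def ArcVal (n k a b : ℕ) : Prop :=
  (a = b + 1 ∨ a = 0 ∧ b + 1 = n) ∨ (b = a + k ∨ b + n = a + k)

theorem succ_modEq_iff_of_lt {n a b : ℕ} (hb : b < n) (ha : a < n) :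
    b + 1 ≡ a [MOD n] ↔ a = b + 1 ∨ a = 0 ∧ b + 1 = n := by
  rcases Nat.lt_or_ge (b + 1) n with h | h
  · rw [Nat.ModEq, Nat.mod_eq_of_lt h, Nat.mod_eq_of_lt ha]
    omega
  · rw [Nat.ModEq, show b + 1 = n by omega, Nat.mod_self, Nat.mod_eq_of_lt ha]
    omega

theorem modEq_add_iff_of_lt {n k a b : ℕ} (hkn : k ≤ n) (hb : b < n) (ha : a < n) :
    b ≡ a + k [MOD n] ↔ b = a + k ∨ b + n = a + k := by
  rcases Nat.lt_or_ge (a + k) n with h | h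
  · rw [Nat.ModEq, Nat.mod_eq_of_lt h, Nat.mod_eq_of_lt hb]
    omega
  · rw [Nat.ModEq, Nat.mod_eq_sub_mod h, Nat.mod_eq_of_lt hb, Nat.mod_eq_of_lt (by omega)]
    omega

theorem circArc_iff_arcVal {n k : ℕ} [NeZero n] (hkn : k ≤ n) (v u w : ZMod n) :
    circArc n {k} u w ↔ ArcVal n k (u - v).val (w - v).val := by
  have ha := ZMod.val_lt (u - v)
  have hb := ZMod.val_lt (w - v)
  set a := (u - v).val with ha_def
  set b := (w - v).val with hb_def
  have hu : u = v + a := by rw [ha_def, ZMod.natCast_zmod_val]; ring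
  have hw : w = v + b := by rw [hb_def, ZMod.natCast_zmod_val]; ring
  have hdown : w - u = -1 ↔ b + 1 ≡ a [MOD n] := by
    rw [← ZMod.natCast_eq_natCast_iff, hu, hw]
    push_cast
    constructor <;> intro h <;> linear_combination h
  have hup : w - u = k ↔ b ≡ a + k [MOD n] := by
    rw [← ZMod.natCast_eq_natCast_iff, hu, hw]
    push_cast
    constructor <;> intro h <;> linear_combination h
  simp only [circArc, Set.mem_singleton_iff, exists_eq_left, hdown, hup, ArcVal]
  exact or_congr (succ_modEq_iff_of_lt hb ha) (modEq_add_iff_of_lt hkn hb ha)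

theorem exists_circArc_of_arcVal {n k a : ℕ} [NeZero n] (hkn : k ≤ n) (v : ZMod n) {u : ZMod n}
    (ha : a < n) (h : ArcVal n k (u - v).val a) :
    ∃ w, circArc n {k} u w ∧ (w - v).val = a := by
  have hval : (v + a - v).val = a := by
    rw [add_sub_cancel_left, ZMod.val_natCast_of_lt ha]
  exact ⟨v + a, (circArc_iff_arcVal hkn v _ _).2 (by rwa [hval]), hval⟩

/-- The distance in `D(n, {k})` from `a ∈ [0, n)` to `0`, for `k * k ≤ n`: either descend to `0` or
climb to `n`. -/
def circDist (n k a : ℕ) : ℕ := min a (climb k (n - a))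

/-- The length of a shortest walk from `a` up to `n + b` on the integer line that avoids `n`, where
`b < a < n`. When steps `-1` occur anyway, their order can be chosen so as to miss `n`. A pure climb
meets `n` when `k` divides both `n - a` and `b`, and is then lengthened by one step `+k` and `k`
steps `-1`, the first of which is taken at once. -/
def detour (n k a b : ℕ) : ℕ :=
  climb k (n - a + b) + if k ∣ n - a ∧ k ∣ b then k + 1 else 0

/-- The distance from `a` to `b` in `D(n, {k})` without the vertex `0`, for `a`, `b` in `[1, n)` and
`k * k ≤ n`. Steps `-1` cannot cross the deleted vertex, so a path either stays within `[1, n)` or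
jumps upwards over `n`. -/
def delDist (n k a b : ℕ) : ℕ :=
  if a ≤ b then climb k (b - a) else min (a - b) (detour n k a b)

section CircDist

variable {n k a b : ℕ}

theorem circDist_le_of_arcVal (hk : 0 < k) (hkn : k * k ≤ n) (ha : a < n) (hb : b < n)
    (h : ArcVal n k a b) : circDist n k a ≤ circDist n k b + 1 := by
  unfold circDist
  rcases h with (rfl | ⟨rfl, -⟩) | (rfl | h)
  · have := climb_le_climb_succ_add_one hk (n - (b + 1))
    rw [show n - (b + 1) + 1 = n - b by omega] at this
    omega
  · omega
  · have := climb_add_self hk (n - (a + k))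
    rw [show n - (a + k) + k = n - a by omega] at this
    omega
  · have hshort := climb_of_le (k := k) (x := n - a) (by omega) (by omega)
    have hturn := climb_le_climb_add hk hkn (x := n - a) (by omega)
    have hlast := climb_add_self hk (n - b)
    rw [show n - b + k = n + (n - a) by omega] at hlast
    omega

theorem exists_arcVal_circDist_lt (hk : 0 < k) (ha0 : a ≠ 0) (ha : a < n) :
    ∃ b < n, ArcVal n k a b ∧ circDist n k b < circDist n k a := by
  unfold circDist
  by_cases hup : climb k (n - a) < a ∧ k ∣ n - a
  · have hkle : k ≤ n - a := Nat.le_of_dvd (by omega) hup.2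
    have hlast := climb_add_self hk (n - (a + k))
    rw [show n - (a + k) + k = n - a by omega] at hlast
    rcases eq_or_ne (a + k) n with h | h
    · exact ⟨0, by omega, Or.inr (Or.inr (by omega)), by omega⟩
    · exact ⟨a + k, by omega, Or.inr (Or.inl rfl), by omega⟩
  · refine ⟨a - 1, by omega, Or.inl (Or.inl (by omega)), ?_⟩
    rcases Nat.lt_or_ge (climb k (n - a)) a with hlt | hge
    · have := climb_succ_of_not_dvd hk (fun h => hup ⟨hlt, h⟩)
      rw [show n - a + 1 = n - (a - 1) by omega] at this
      omega
    · omega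

end CircDist

section DelDist

variable {n k a b c : ℕ}

theorem detour_add_self (hk : 0 < k) (ha : a + k ≤ n) (b : ℕ) :
    detour n k a b = detour n k (a + k) b + 1 := by
  have hclimb := climb_add_self hk (n - (a + k) + b)
  have hdvd : k ∣ n - a ↔ k ∣ n - (a + k) := by
    rw [show n - a = n - (a + k) + k by omega, Nat.dvd_add_self_right]
  rw [show n - (a + k) + b + k = n - a + b by omega] at hclimb
  simp only [detour, hdvd]
  omega

theorem detour_of_lt_of_lt_add (ha : a < n) (hak : n < a + k) :
    detour n k a b = climb k (n - a + b) := by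
  have hdvd : ¬ k ∣ n - a := Nat.not_dvd_of_pos_of_lt (by omega) (by omega)
  simp [detour, hdvd]

theorem detour_succ_le (hk : 0 < k) (ha : a < n) (b : ℕ) :
    detour n k (a + 1) b ≤ detour n k a b + 1 := by
  unfold detour
  rw [show n - a + b = n - (a + 1) + b + 1 by omega]
  split_ifs with h
  iterate 2
    · have := climb_succ_of_dvd hk (dvd_add h.1 h.2)
      omega
  all_goals
    have := climb_le_climb_succ_add_one hk (n - (a + 1) + b)
    omega

theorem detour_lt_detour_succ_or (hk : 2 ≤ k) (ha : a < n) (hb : 0 < b) :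
    detour n k a b < detour n k (a + 1) b ∨
      ¬ k ∣ n - (a + 1) ∧ k ≤ n - (a + 1) + b := by
  have hk0 : 0 < k := by omega
  by_cases hkb : k ∣ b
  · by_cases hka : k ∣ n - (a + 1)
    · left
      have hka' : ¬ k ∣ n - a := by
        rw [show n - a = n - (a + 1) + 1 by omega, Nat.dvd_add_right hka, Nat.dvd_one]
        omega
      have := climb_succ_of_dvd hk0 (dvd_add hka hkb)
      rw [show n - (a + 1) + b + 1 = n - a + b by omega] at this
      simp only [detour, hka, hka', hkb, and_self, if_true, false_and, if_false]
      omega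
    · exact Or.inr ⟨hka, (Nat.le_of_dvd hb hkb).trans (Nat.le_add_left _ _)⟩
  · by_cases hkab : k ∣ n - (a + 1) + b
    · exact Or.inr ⟨fun h => hkb ((Nat.dvd_add_right h).1 hkab),
        Nat.le_of_dvd (by omega) hkab⟩
    · left
      have := climb_succ_of_not_dvd hk0 hkab
      rw [show n - (a + 1) + b + 1 = n - a + b by omega] at this
      simp only [detour, hkb, and_false, if_false]
      omega

theorem delDist_of_le (h : a ≤ b) : delDist n k a b = climb k (b - a) := if_pos h

theorem delDist_of_lt (h : b < a) : delDist n k a b = min (a - b) (detour n k a b) :=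
  if_neg h.not_ge

theorem delDist_of_lt_of_lt_add (hk : 0 < k) (hkn : k * k ≤ n) (ha : a < n) (hba : b < a)
    (hab : a < b + k) : delDist n k a b = a - b := by
  have hshort := climb_of_le (k := k) (x := b + k - a) (by omega) (by omega)
  have hturn := climb_le_climb_add hk hkn (x := b + k - a) (by omega)
  have hlast := climb_add_self hk (n - a + b)
  rw [show n - a + b + k = n + (b + k - a) by omega] at hlast
  rw [delDist_of_lt hba, detour]
  omega

theorem delDist_succ_le (hk : 0 < k) (ha : a < n) (b : ℕ) :
    delDist n k (a + 1) b ≤ delDist n k a b + 1 := by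
  rcases lt_trichotomy a b with hab | rfl | hab
  · have := climb_le_climb_succ_add_one hk (b - (a + 1))
    rw [show b - (a + 1) + 1 = b - a by omega] at this
    rw [delDist_of_le hab, delDist_of_le hab.le]
    exact this
  · rw [delDist_of_lt (Nat.lt_succ_self a)]
    omega
  · have := detour_succ_le hk ha b
    rw [delDist_of_lt hab, delDist_of_lt (by omega)]
    omega

theorem delDist_le_add_self (hk : 0 < k) (hkn : k * k ≤ n) (ha : a + k < n) (b : ℕ) :
    delDist n k a b ≤ delDist n k (a + k) b + 1 := by
  rcases Nat.lt_or_ge b a with hba | hab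
  · have := detour_add_self hk ha.le b
    rw [delDist_of_lt hba, delDist_of_lt (by omega)]
    omega
  rw [delDist_of_le hab]
  rcases Nat.lt_or_ge b (a + k) with hlt | hge
  · rcases hab.eq_or_lt with rfl | hab
    · rw [Nat.sub_self, climb_zero hk]
      exact Nat.zero_le _
    · rw [delDist_of_lt_of_lt_add hk hkn ha hlt (by omega), climb_of_le (by omega) (by omega)]
      omega
  · have := climb_add_self hk (b - (a + k))
    rw [show b - (a + k) + k = b - a by omega] at this
    rw [delDist_of_le hge, this]

theorem delDist_le_of_add_eq (hk : 0 < k) (hkn : k * k ≤ n) (ha : a < n) (hb : b < n)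
    (hc : 0 < c) (h : c + n = a + k) : delDist n k a b ≤ delDist n k c b + 1 := by
  have hkn' : k ≤ n := (Nat.le_mul_self k).trans hkn
  rcases Nat.lt_or_ge b a with hba | hab
  · rw [delDist_of_lt hba, detour_of_lt_of_lt_add ha (by omega)]
    rcases Nat.lt_or_ge b c with hbc | hcb
    · have := climb_of_le (k := k) (x := n - a + b) (by omega) (by omega)
      rw [delDist_of_lt_of_lt_add hk hkn (by omega) hbc (by omega)]
      omega
    · have := climb_add_self hk (b - c)
      rw [show b - c + k = n - a + b by omega] at this
      rw [delDist_of_le hcb]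
      omega
  · have hturn := climb_le_climb_add hk hkn (x := b - a) (by omega)
    have hlast := climb_add_self hk (b - c)
    rw [show b - c + k = n + (b - a) by omega] at hlast
    rw [delDist_of_le hab, delDist_of_le (by omega)]
    omega

theorem delDist_le_of_arcVal (hk : 0 < k) (hkn : k * k ≤ n) (ha0 : 0 < a) (ha : a < n)
    (hb : b < n) (hc0 : 0 < c) (hc : c < n) (h : ArcVal n k a c) :
    delDist n k a b ≤ delDist n k c b + 1 := by
  rcases h with (rfl | ⟨rfl, -⟩) | (rfl | h)
  · exact delDist_succ_le hk hc b
  · exact absurd ha0 (lt_irrefl 0)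
  · exact delDist_le_add_self hk hkn hc b
  · exact delDist_le_of_add_eq hk hkn ha hb hc0 h

theorem exists_arcVal_delDist_lt_of_lt (hk : 2 ≤ k) (hkn : k * k ≤ n) (ha0 : 0 < a)
    (hab : a < b) (hb : b < n) :
    ∃ c, 0 < c ∧ c < n ∧ ArcVal n k a c ∧ delDist n k c b < delDist n k a b := by
  have hk0 : 0 < k := by omega
  rw [delDist_of_le hab.le]
  rcases Nat.lt_or_ge b (a + k) with hlt | hge
  · rw [climb_of_le (by omega) (by omega)]
    rcases Nat.lt_or_ge (a + k) n with hak | hak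
    · refine ⟨a + k, by omega, hak, Or.inr (Or.inl rfl), ?_⟩
      rw [delDist_of_lt_of_lt_add hk0 hkn hak hlt (by omega)]
      omega
    · have hkn' : 2 * k ≤ n := (Nat.mul_le_mul_right k hk).trans hkn
      refine ⟨a - 1, by omega, by omega, Or.inl (Or.inl (by omega)), ?_⟩
      rw [delDist_of_le (by omega), climb_of_le (by omega) (by omega)]
      omega
  · have := climb_add_self hk0 (b - (a + k))
    rw [show b - (a + k) + k = b - a by omega] at this
    refine ⟨a + k, by omega, by omega, Or.inr (Or.inl rfl), ?_⟩
    rw [delDist_of_le hge]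
    omega

theorem delDist_lt_delDist_succ (hk : 0 < k) (hba : b ≤ a)
    (h : a + 1 - b ≤ detour n k (a + 1) b ∨ detour n k a b < detour n k (a + 1) b) :
    delDist n k a b < delDist n k (a + 1) b := by
  rw [delDist_of_lt (show b < a + 1 by omega)]
  rcases hba.eq_or_lt with rfl | hba
  · rw [delDist_of_le le_rfl, Nat.sub_self, climb_zero hk]
    omega
  · rw [delDist_of_lt hba]
    omega

theorem exists_arcVal_delDist_lt_of_not_dvd (hk : 0 < k) (hba : b < a) (ha : a < n)
    (hdvd : ¬ k ∣ n - a) (hkb : k ≤ n - a + b) (hlt : detour n k a b < a - b) :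
    ∃ c, 0 < c ∧ c < n ∧ ArcVal n k a c ∧ delDist n k c b < delDist n k a b := by
  rw [delDist_of_lt hba]
  rcases lt_trichotomy (a + k) n with hak | hak | hak
  · have := detour_add_self hk hak.le b
    refine ⟨a + k, by omega, hak, Or.inr (Or.inl rfl), ?_⟩
    rw [delDist_of_lt (by omega)]
    omega
  · exact absurd ⟨1, by omega⟩ hdvd
  · have := climb_add_self hk (b - (a + k - n))
    rw [show b - (a + k - n) + k = n - a + b by omega] at this
    refine ⟨a + k - n, by omega, by omega, Or.inr (Or.inr (by omega)), ?_⟩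
    rw [delDist_of_le (by omega)]
    rw [detour_of_lt_of_lt_add ha hak] at hlt ⊢
    omega

theorem exists_arcVal_delDist_lt (hk : 2 ≤ k) (hkn : k * k ≤ n) (ha0 : 0 < a) (ha : a < n)
    (hb0 : 0 < b) (hb : b < n) (hab : a ≠ b) :
    ∃ c, 0 < c ∧ c < n ∧ ArcVal n k a c ∧ delDist n k c b < delDist n k a b := by
  have hk0 : 0 < k := by omega
  rcases hab.lt_or_gt with hab | hba
  · exact exists_arcVal_delDist_lt_of_lt hk hkn ha0 hab hb
  obtain ⟨a, rfl⟩ : ∃ a', a = a' + 1 := ⟨a - 1, by omega⟩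
  by_cases hdown : a + 1 - b ≤ detour n k (a + 1) b ∨ detour n k a b < detour n k (a + 1) b
  · exact ⟨a, by omega, by omega, Or.inl (Or.inl rfl),
      delDist_lt_delDist_succ hk0 (by omega) hdown⟩
  · obtain ⟨hdvd, hkb⟩ := (detour_lt_detour_succ_or hk (by omega) hb0).resolve_left
      fun h => hdown (Or.inr h)
    exact exists_arcVal_delDist_lt_of_not_dvd hk0 hba ha hdvd hkb (by omega)

end DelDist

section Circulant

variable {n k : ℕ} [NeZero n]

theorem ddist_circArc (hk : 0 < k) (hkn : k * k ≤ n) (u t : ZMod n) :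
    ddist (circArc n {k}) u t = circDist n k (u - t).val := by
  have hkn' : k ≤ n := (Nat.le_mul_self k).trans hkn
  refine ddist_eq_of_potential (d := fun u => circDist n k (u - t).val) ?_ ?_ ?_ u
  · simp [circDist]
  · intro u w huw
    exact circDist_le_of_arcVal hk hkn (ZMod.val_lt _) (ZMod.val_lt _)
      ((circArc_iff_arcVal hkn' t u w).1 huw)
  · intro u hut
    obtain ⟨b, hb, harc, hlt⟩ := exists_arcVal_circDist_lt hk
      ((ZMod.val_ne_zero _).2 (sub_ne_zero.2 hut)) (ZMod.val_lt (u - t))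
    obtain ⟨w, huw, rfl⟩ := exists_circArc_of_arcVal hkn' t hb harc
    exact ⟨w, huw, hlt⟩

theorem ddist_delRel_circArc (hk : 2 ≤ k) (hkn : k * k ≤ n) (v : ZMod n)
    (u t : {x : ZMod n // x ≠ v}) :
    ddist (delRel (circArc n {k}) v) u t = delDist n k (u.1 - v).val (t.1 - v).val := by
  have hk0 : 0 < k := by omega
  have hkn' : k ≤ n := (Nat.le_mul_self k).trans hkn
  have hpos (x : {x : ZMod n // x ≠ v}) : 0 < (x.1 - v).val :=
    ZMod.val_pos.2 (sub_ne_zero.2 x.2)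
  refine ddist_eq_of_potential (d := fun u => delDist n k (u.1 - v).val (t.1 - v).val) ?_ ?_ ?_ u
  · simp [delDist_of_le, climb_zero hk0]
  · intro u w huw
    exact delDist_le_of_arcVal hk0 hkn (hpos u) (ZMod.val_lt _) (ZMod.val_lt _) (hpos w)
      (ZMod.val_lt _) ((circArc_iff_arcVal hkn' v u w).1 huw)
  · intro u hut
    have hval : (u.1 - v).val ≠ (t.1 - v).val := fun h =>
      hut (Subtype.ext (sub_left_injective (ZMod.val_injective n h)))
    obtain ⟨b, hb0, hb, harc, hlt⟩ := exists_arcVal_delDist_lt hk hkn (hpos u) (ZMod.val_lt _)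
      (hpos t) (ZMod.val_lt _) hval
    obtain ⟨w, huw, rfl⟩ := exists_circArc_of_arcVal hkn' v hb harc
    exact ⟨⟨w, sub_ne_zero.1 (ZMod.val_pos.1 hb0)⟩, huw, hlt⟩

theorem sum_val_sub {M : Type*} [AddCommMonoid M] (v : ZMod n) (f : ℕ → M) :
    ∑ u, f (u - v).val = ∑ a ∈ Finset.range n, f a := by
  refine Finset.sum_bij' (fun u _ => (u - v).val) (fun a _ => v + a) ?_ ?_ ?_ ?_ ?_
  · simp [ZMod.val_lt]
  · simp
  · simp
  · intro a ha
    rw [add_sub_cancel_left, ZMod.val_natCast_of_lt (Finset.mem_range.1 ha)]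
  · simp

theorem sum_ne_val_sub {M : Type*} [AddCommMonoid M] (v : ZMod n) (f : ℕ → M) :
    ∑ u : {x : ZMod n // x ≠ v}, f (u.1 - v).val = ∑ a ∈ Finset.Ico 1 n, f a := by
  have hval {a : ℕ} (ha : a ∈ Finset.Ico 1 n) : (v + a - v).val = a := by
    rw [add_sub_cancel_left, ZMod.val_natCast_of_lt (Finset.mem_Ico.1 ha).2]
  have hne {a : ℕ} (ha : a ∈ Finset.Ico 1 n) : v + a ≠ v := by
    rw [← sub_ne_zero, ← ZMod.val_ne_zero, hval ha]
    exact Nat.one_le_iff_ne_zero.1 (Finset.mem_Ico.1 ha).1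
  refine Finset.sum_bij' (fun u _ => (u.1 - v).val) (fun a ha => ⟨v + a, hne ha⟩) ?_ ?_ ?_ ?_ ?_
  · exact fun u _ => Finset.mem_Ico.2 ⟨ZMod.val_pos.2 (sub_ne_zero.2 u.2), ZMod.val_lt _⟩
  · simp
  · simp
  · exact fun a ha => hval ha
  · simp

theorem wiener_circArc (hk : 0 < k) (hkn : k * k ≤ n) :
    wiener (circArc n {k}) = (n * ∑ a ∈ Finset.range n, circDist n k a : ℕ) := by
  simp only [wiener, ddist_circArc hk hkn]
  rw [Finset.sum_comm]
  simp only [sum_val_sub _ fun a => (circDist n k a : ℕ∞)]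
  simp

theorem wiener_delRel_circArc (hk : 2 ≤ k) (hkn : k * k ≤ n) (v : ZMod n) :
    wiener (delRel (circArc n {k}) v) =
      (∑ a ∈ Finset.Ico 1 n, ∑ b ∈ Finset.Ico 1 n, delDist n k a b : ℕ) := by
  simp only [wiener, ddist_delRel_circArc hk hkn]
  have hrow (a : ℕ) := sum_ne_val_sub v fun b => (delDist n k a b : ℕ∞)
  simp only [hrow]
  rw [sum_ne_val_sub v fun a => ∑ b ∈ Finset.Ico 1 n, (delDist n k a b : ℕ∞)]
  push_cast
  rfl

end Circulant

theorem sum_circDist_85_4 : ∑ a ∈ Finset.range 85, circDist 85 4 a = 850 := by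
  decide +kernel

theorem sum_delDist_85_4 :
    ∑ a ∈ Finset.Ico 1 85, ∑ b ∈ Finset.Ico 1 85, delDist 85 4 a b = 85 * 850 := by
  decide +kernel

theorem stmt17 (v : ZMod 85) :
    wiener (delRel (circArc 85 {4}) v) = wiener (circArc 85 {4}) := by
  rw [wiener_delRel_circArc (by norm_num) (by norm_num),
    wiener_circArc (by norm_num) (by norm_num), sum_delDist_85_4, sum_circDist_85_4]
end
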